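/- arXiv:0712.2924 — 4 statements merged into one kernel-verified Lean document; each statement's English description precedes it below -/
import Mathlib

section
/- For every real number X with 0 ≤ X ≤ 1, every n : ℕ, every ψ ∈ H and every configuration α : Fin n → Bool, the norm-squared of the Kraus-string branch equals the double sum over quantum histories: ⟪K(α)ψ, K(α)ψ⟫ = ∑_{Φ : Fin n → Bool} ∑_{Φ' : Fin n → Bool} (X^(d(α,Φ)+d(α,Φ')) / (1+X^2)^n) • ⟪C(Φ)ψ, C(Φ')ψ⟫. (This is Lemma 1: the collapse-model decoherence functional D_c on a cylinder set equals the coupled decoherence functional D_qc coarse grained over all quantum histories.) -/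
open scoped InnerProductSpace

noncomputable section

/-- Ordered composition `A (n-1) ∘ₗ ⋯ ∘ₗ A 0` of a family of linear maps. -/
def opString {H : Type*} [NormedAddCommGroup H] [InnerProductSpace ℂ H] {n : ℕ}
    (A : Fin n → (H →ₗ[ℂ] H)) : H →ₗ[ℂ] H :=
  (List.finRange n).foldl (fun acc i => A i ∘ₗ acc) LinearMap.id

/-- Hamming distance: the number of indices on which two configurations differ. -/
def hamming {n : ℕ} (f g : Fin n → Bool) : ℕ :=
  (Finset.univ.filter fun i => f i ≠ g i).card

/-- The jump (Kraus) operator `J i b = (√(1+X²))⁻¹ • (P i b + X • P i (!b))`. -/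
def jumpOp {H : Type*} [NormedAddCommGroup H] [InnerProductSpace ℂ H] {n : ℕ}
    (X : ℝ) (P : Fin n → Bool → (H →ₗ[ℂ] H)) (i : Fin n) (b : Bool) : H →ₗ[ℂ] H :=
  (((Real.sqrt (1 + X ^ 2))⁻¹ : ℝ) : ℂ) • (P i b + (X : ℂ) • P i (!b))

/-- The Kraus string `K(α) = J (n-1) (α (n-1)) ∘ₗ R (n-1) ∘ₗ ⋯ ∘ₗ J 0 (α 0) ∘ₗ R 0`. -/
def krausString {H : Type*} [NormedAddCommGroup H] [InnerProductSpace ℂ H] {n : ℕ}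
    (X : ℝ) (R : Fin n → (H →ₗ[ℂ] H)) (P : Fin n → Bool → (H →ₗ[ℂ] H))
    (α : Fin n → Bool) : H →ₗ[ℂ] H :=
  opString fun i => jumpOp X P i (α i) ∘ₗ R i

/-- The class string `C(Φ) = P (n-1) (Φ (n-1)) ∘ₗ R (n-1) ∘ₗ ⋯ ∘ₗ P 0 (Φ 0) ∘ₗ R 0`. -/
def classString {H : Type*} [NormedAddCommGroup H] [InnerProductSpace ℂ H] {n : ℕ}
    (R : Fin n → (H →ₗ[ℂ] H)) (P : Fin n → Bool → (H →ₗ[ℂ] H))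
    (Φ : Fin n → Bool) : H →ₗ[ℂ] H :=
  opString fun i => P i (Φ i) ∘ₗ R i

/-!
The ordered composition of linear maps is multilinear in its factors, and `jumpOp X P i b` is, up to
the factor `(√(1 + X²))⁻¹`, the sum of all `P i b'`, weighted by `X` where `b'` disagrees with `b`
and by `1` where it agrees. Distributing the Kraus string over these sums gives
`K(α) = (√(1 + X²))⁻ⁿ ∑_Φ X ^ d(α, Φ) C(Φ)`, and sesquilinearity of the inner product does the rest.
-/

theorem prod_ite_ne_eq_pow_hammingDist {ι M : Type*} {β : ι → Type*} [Fintype ι]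
    [∀ i, DecidableEq (β i)] [CommMonoid M] (x : M) (f g : ∀ i, β i) :
    ∏ i, (if f i ≠ g i then x else 1) = x ^ hammingDist f g := by
  rw [← Finset.prod_filter, Finset.prod_const, hammingDist]

theorem inner_sum_smul_sum_smul {𝕝 𝕜 E ι κ : Type*} [RCLike 𝕜] [SeminormedAddCommGroup E]
    [InnerProductSpace 𝕜 E] [CommSemiring 𝕝] [StarRing 𝕝] [Algebra 𝕝 𝕜] [StarModule 𝕝 𝕜]
    [Module 𝕝 E] [IsScalarTower 𝕝 𝕜 E] (s : Finset ι) (t : Finset κ) (v : ι → 𝕝) (w : κ → 𝕝)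
    (x : ι → E) (y : κ → E) :
    ⟪∑ i ∈ s, v i • x i, ∑ j ∈ t, w j • y j⟫_𝕜 =
      ∑ i ∈ s, ∑ j ∈ t, (starRingEnd 𝕝 (v i) * w j) • ⟪x i, y j⟫_𝕜 := by
  simp_rw [sum_inner, inner_sum, inner_smul_left_eq_star_smul, inner_smul_right_eq_smul, smul_smul]

theorem hamming_eq_hammingDist {n : ℕ} (f g : Fin n → Bool) : hamming f g = hammingDist f g :=
  rfl

section OperatorStrings

variable {𝕜 : Type*} [CommSemiring 𝕜] [Algebra 𝕜 ℂ]
  {H : Type*} [NormedAddCommGroup H] [InnerProductSpace ℂ H] [Module 𝕜 H] [IsScalarTower 𝕜 ℂ H]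
  {n : ℕ}

theorem opString_eq_prod_ofFn_rev (A : Fin n → (H →ₗ[ℂ] H)) :
    opString A = (List.ofFn fun i => (A i.rev : Module.End ℂ H)).prod := by
  have ofFn_rev : List.ofFn (fun i => A i.rev) = ((List.finRange n).map A).reverse := by
    rw [← List.map_reverse, List.finRange_reverse, List.map_map, List.ofFn_eq_map,
      Function.comp_def]
  rw [ofFn_rev, List.prod_eq_foldr, List.foldr_reverse, List.foldl_map]
  rfl

variable (𝕜 H n) in
/-- The ordered composition `opString` as a `𝕜`-multilinear map of its `n` factors. The index is
reversed because `MultilinearMap.mkPiAlgebraFin` puts factor `0` leftmost, whereas `opString`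
applies it first. -/
def opStringMultilinear : MultilinearMap 𝕜 (fun _ : Fin n => H →ₗ[ℂ] H) (H →ₗ[ℂ] H) :=
  (MultilinearMap.mkPiAlgebraFin 𝕜 n (Module.End ℂ H)).domDomCongr Fin.revPerm

theorem coe_opStringMultilinear : ⇑(opStringMultilinear 𝕜 H n) = opString :=
  funext fun A => (opString_eq_prod_ofFn_rev A).symm

theorem opString_smul (c : Fin n → 𝕜) (A : Fin n → (H →ₗ[ℂ] H)) :
    opString (fun i => c i • A i) = (∏ i, c i) • opString A := by
  simpa only [coe_opStringMultilinear] using (opStringMultilinear 𝕜 H n).map_smul_univ c A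

theorem opString_sum {ι : Fin n → Type*} [∀ i, Fintype (ι i)] (A : ∀ i, ι i → (H →ₗ[ℂ] H)) :
    opString (fun i => ∑ b, A i b) = ∑ Φ : ∀ i, ι i, opString fun i => A i (Φ i) := by
  simpa only [coe_opStringMultilinear] using (opStringMultilinear ℂ H n).map_sum (g := A)

theorem jumpOp_eq_smul_sum (X : ℝ) (P : Fin n → Bool → (H →ₗ[ℂ] H)) (i : Fin n) (b : Bool) :
    jumpOp X P i b = (√(1 + X ^ 2))⁻¹ • ∑ b', (if b ≠ b' then X else 1) • P i b' := by
  rw [jumpOp, Complex.coe_smul, Complex.coe_smul]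
  cases b <;> simp [add_comm]

theorem jumpOp_comp_eq_smul_sum (X : ℝ) (P : Fin n → Bool → (H →ₗ[ℂ] H)) (i : Fin n)
    (b : Bool) (S : H →ₗ[ℂ] H) :
    jumpOp X P i b ∘ₗ S =
      (√(1 + X ^ 2))⁻¹ • ∑ b', (if b ≠ b' then X else 1) • (P i b' ∘ₗ S) := by
  ext x
  simp only [jumpOp_eq_smul_sum, LinearMap.comp_apply, LinearMap.smul_apply, LinearMap.sum_apply]

theorem krausString_eq_smul_sum (X : ℝ) (R : Fin n → (H →ₗ[ℂ] H))
    (P : Fin n → Bool → (H →ₗ[ℂ] H)) (α : Fin n → Bool) :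
    krausString X R P α =
      (√(1 + X ^ 2))⁻¹ ^ n • ∑ Φ : Fin n → Bool, X ^ hamming α Φ • classString R P Φ := by
  have distribute : krausString X R P α = (∏ _i : Fin n, (√(1 + X ^ 2))⁻¹) •
      ∑ Φ : Fin n → Bool, (∏ i, if α i ≠ Φ i then X else 1) • classString R P Φ := by
    simp only [krausString, classString, jumpOp_comp_eq_smul_sum, opString_smul, opString_sum]
  simpa only [prod_ite_ne_eq_pow_hammingDist, ← hamming_eq_hammingDist, Finset.prod_const,
    Finset.card_fin] using distribute

theorem krausString_apply (X : ℝ) (R : Fin n → (H →ₗ[ℂ] H))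
    (P : Fin n → Bool → (H →ₗ[ℂ] H)) (α : Fin n → Bool) (ψ : H) :
    krausString X R P α ψ =
      (√(1 + X ^ 2))⁻¹ ^ n • ∑ Φ : Fin n → Bool, X ^ hamming α Φ • classString R P Φ ψ := by
  simp only [krausString_eq_smul_sum, LinearMap.smul_apply, LinearMap.sum_apply]

theorem collapse_measure_eq_coarse_grained_quantum_general (X : ℝ)
    (R : Fin n → (H →ₗ[ℂ] H)) (P : Fin n → Bool → (H →ₗ[ℂ] H))
    (ψ φ : H) (α β : Fin n → Bool) :
    ⟪krausString X R P α ψ, krausString X R P β φ⟫_ℂ =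
      ∑ Φ : Fin n → Bool, ∑ Φ' : Fin n → Bool,
        (X ^ (hamming α Φ + hamming β Φ') / (1 + X ^ 2) ^ n) •
          ⟪classString R P Φ ψ, classString R P Φ' φ⟫_ℂ := by
  have normalization : (√(1 + X ^ 2))⁻¹ ^ n * (√(1 + X ^ 2))⁻¹ ^ n = ((1 + X ^ 2) ^ n)⁻¹ := by
    rw [← mul_pow, ← mul_inv, Real.mul_self_sqrt (by positivity), inv_pow]
  rw [krausString_apply, krausString_apply, inner_smul_left_eq_smul, inner_smul_right_eq_smul,
    smul_smul, normalization, inner_sum_smul_sum_smul]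
  simp only [conj_trivial, Finset.smul_sum, smul_smul, ← pow_add, div_eq_inv_mul]

end OperatorStrings

/-- Lemma 1: the collapse-model decoherence functional `D_c` on a cylinder set equals the
coupled decoherence functional `D_qc` coarse grained over all quantum histories. -/
theorem collapse_measure_eq_coarse_grained_quantum
    {H : Type*} [NormedAddCommGroup H] [InnerProductSpace ℂ H] [FiniteDimensional ℂ H]
    (n : ℕ) (X : ℝ) (hX0 : 0 ≤ X) (hX1 : X ≤ 1)
    (R : Fin n → (H →ₗ[ℂ] H)) (P : Fin n → Bool → (H →ₗ[ℂ] H))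
    (ψ : H) (α : Fin n → Bool) :
    ⟪krausString X R P α ψ, krausString X R P α ψ⟫_ℂ =
      ∑ Φ : Fin n → Bool, ∑ Φ' : Fin n → Bool,
        ((X ^ (hamming α Φ + hamming α Φ') / (1 + X ^ 2) ^ n : ℝ)) •
          ⟪classString R P Φ ψ, classString R P Φ' ψ⟫_ℂ :=
  collapse_measure_eq_coarse_grained_quantum_general X R P ψ ψ α α

end
end

section
/- Assume additionally that for each i ∈ Fin n, P i false + P i true = id, each P i b is idempotent and self-adjoint, and each R i preserves the inner product (is unitary). Then for every ψ ∈ H, ∑_{α : Fin n → Bool} ‖K(α)ψ‖^2 = ‖ψ‖^2. (This expresses that the collapse-model measure μ_c is a normalized classical probability measure: the measures of all cylinder sets of time extent n sum to ‖ψ₀‖² = 1.) -/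
open scoped InnerProductSpace

noncomputable section

/-- A Kraus family with set of outcomes `ι`: operators `K a` whose outcome weights `‖K a v‖ ^ 2`
sum to `‖v‖ ^ 2`, so that each step of a collapse process preserves total probability. On Hilbert
spaces this is the completeness relation `∑ a, (K a)† ∘ K a = 1`; the form chosen here needs no
adjoints. -/
def IsKrausFamily {ι 𝕜 E F : Type*} [Fintype ι] [Semiring 𝕜] [SeminormedAddCommGroup E]
    [SeminormedAddCommGroup F] [Module 𝕜 E] [Module 𝕜 F] (K : ι → E →ₗ[𝕜] F) : Prop :=
  ∀ v, ∑ a, ‖K a v‖ ^ 2 = ‖v‖ ^ 2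

theorem IsKrausFamily.comp_linearIsometry {ι 𝕜 D E F : Type*} [Fintype ι] [Semiring 𝕜]
    [SeminormedAddCommGroup D] [SeminormedAddCommGroup E] [SeminormedAddCommGroup F]
    [Module 𝕜 D] [Module 𝕜 E] [Module 𝕜 F] {K : ι → E →ₗ[𝕜] F} (hK : IsKrausFamily K)
    (R : D →ₗᵢ[𝕜] E) : IsKrausFamily fun a => K a ∘ₗ R.toLinearMap := fun v =>
  (hK (R v)).trans (by rw [R.norm_map])

section InnerProductSpace

variable {𝕜 E : Type*} [RCLike 𝕜] [SeminormedAddCommGroup E] [InnerProductSpace 𝕜 E]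

theorem norm_add_smul_sq_of_inner_eq_zero (c : 𝕜) {x y : E} (h : ⟪x, y⟫_𝕜 = 0) :
    ‖x + c • y‖ ^ 2 = ‖x‖ ^ 2 + ‖c‖ ^ 2 * ‖y‖ ^ 2 := by
  rw [norm_add_sq (𝕜 := 𝕜), inner_smul_right, h, norm_smul, mul_zero, map_zero, mul_zero,
    add_zero, mul_pow]

theorem norm_add_smul_sq_add_norm_add_smul_sq_of_inner_eq_zero (c : 𝕜) {x y : E}
    (h : ⟪x, y⟫_𝕜 = 0) :
    ‖x + c • y‖ ^ 2 + ‖y + c • x‖ ^ 2 = (1 + ‖c‖ ^ 2) * ‖x + y‖ ^ 2 := by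
  have hadd : ‖x + y‖ ^ 2 = ‖x‖ ^ 2 + ‖y‖ ^ 2 := by
    simpa only [one_smul, norm_one, one_pow, one_mul] using
      norm_add_smul_sq_of_inner_eq_zero (1 : 𝕜) h
  rw [norm_add_smul_sq_of_inner_eq_zero c h,
    norm_add_smul_sq_of_inner_eq_zero c (inner_eq_zero_symm.1 h), hadd]
  ring

theorem inner_eq_zero_of_add_eq_id_of_isSymmetricProjection {p q : E →ₗ[𝕜] E}
    (hqp : q + p = LinearMap.id) (hp : p.IsSymmetricProjection) (v : E) : ⟪q v, p v⟫_𝕜 = 0 := by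
  have hpp : p (p v) = p v := LinearMap.congr_fun hp.isIdempotentElem v
  have hq : q v = v - p v := eq_sub_of_add_eq (LinearMap.congr_fun hqp v)
  rw [hq, ← hp.isSymmetric, map_sub, hpp, sub_self, inner_zero_left]

end InnerProductSpace

section OpString

variable {H : Type*} [NormedAddCommGroup H] [InnerProductSpace ℂ H] {n : ℕ}

theorem opString_succ (A : Fin (n + 1) → H →ₗ[ℂ] H) :
    opString A = A (Fin.last n) ∘ₗ opString fun i : Fin n => A i.castSucc := by
  simp only [opString, List.finRange_succ_last, List.foldl_append, List.foldl_map,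
    List.foldl_cons, List.foldl_nil]

theorem isKrausFamily_opString {ι : Fin n → Type*} [∀ i, Fintype (ι i)]
    {K : ∀ i, ι i → H →ₗ[ℂ] H} (hK : ∀ i, IsKrausFamily (K i)) :
    IsKrausFamily fun α : ∀ i, ι i => opString fun i => K i (α i) := by
  intro ψ
  induction n with
  | zero => simp [opString]
  | succ n ih =>
    -- The last outcome enters only the outermost operator, so it is summed out first.
    calc ∑ α : ∀ i, ι i, ‖opString (fun i => K i (α i)) ψ‖ ^ 2
        = ∑ β : ∀ i : Fin n, ι i.castSucc, ∑ b : ι (Fin.last n),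
            ‖K (Fin.last n) b (opString (fun i => K i.castSucc (β i)) ψ)‖ ^ 2 := by
          rw [← (Fin.snocEquiv ι).sum_comp, Fintype.sum_prod_type_right]
          simp only [Fin.snocEquiv_apply, opString_succ, LinearMap.comp_apply, Fin.snoc_last,
            Fin.snoc_castSucc]
      _ = ∑ β : ∀ i : Fin n, ι i.castSucc, ‖opString (fun i => K i.castSucc (β i)) ψ‖ ^ 2 :=
          Fintype.sum_congr _ _ fun _ => hK (Fin.last n) _
      _ = ‖ψ‖ ^ 2 := ih fun i => hK i.castSucc

theorem norm_jumpOp_apply_sq (X : ℝ) (P : Fin n → Bool → (H →ₗ[ℂ] H)) (i : Fin n) (b : Bool)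
    (v : H) :
    ‖jumpOp X P i b v‖ ^ 2 = (1 + X ^ 2)⁻¹ * ‖P i b v + (X : ℂ) • P i (!b) v‖ ^ 2 := by
  have hX : 0 ≤ 1 + X ^ 2 := by positivity
  rw [jumpOp, LinearMap.smul_apply, LinearMap.add_apply, LinearMap.smul_apply, norm_smul, mul_pow,
    Complex.norm_real, Real.norm_eq_abs, sq_abs, inv_pow, Real.sq_sqrt hX]

theorem isKrausFamily_jumpOp (X : ℝ) {P : Fin n → Bool → (H →ₗ[ℂ] H)} {i : Fin n}
    (hPsum : P i false + P i true = LinearMap.id) (hP : (P i true).IsSymmetricProjection) :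
    IsKrausFamily (jumpOp X P i) := by
  intro v
  have horth : ⟪P i true v, P i false v⟫_ℂ = 0 :=
    inner_eq_zero_symm.1 (inner_eq_zero_of_add_eq_id_of_isSymmetricProjection hPsum hP v)
  have hv : P i true v + P i false v = v :=
    (add_comm _ _).trans (LinearMap.congr_fun hPsum v)
  have hX : 1 + X ^ 2 ≠ 0 := by positivity
  calc ∑ b, ‖jumpOp X P i b v‖ ^ 2
      = (1 + X ^ 2)⁻¹ * (‖P i true v + (X : ℂ) • P i false v‖ ^ 2
          + ‖P i false v + (X : ℂ) • P i true v‖ ^ 2) := by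
        simp only [Fintype.sum_bool, norm_jumpOp_apply_sq, Bool.not_true, Bool.not_false, mul_add]
    _ = (1 + X ^ 2)⁻¹ * ((1 + X ^ 2) * ‖v‖ ^ 2) := by
        rw [norm_add_smul_sq_add_norm_add_smul_sq_of_inner_eq_zero _ horth, hv, Complex.norm_real,
          Real.norm_eq_abs, sq_abs]
    _ = ‖v‖ ^ 2 := inv_mul_cancel_left₀ hX _

theorem sum_krausString_norm_sq_general (X : ℝ) {R : Fin n → (H →ₗ[ℂ] H)}
    {P : Fin n → Bool → (H →ₗ[ℂ] H)} (hPsum : ∀ i, P i false + P i true = LinearMap.id)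
    (hP : ∀ i, (P i true).IsSymmetricProjection)
    (hR : ∀ i (u v : H), ⟪R i u, R i v⟫_ℂ = ⟪u, v⟫_ℂ) (ψ : H) :
    ∑ α : Fin n → Bool, ‖krausString X R P α ψ‖ ^ 2 = ‖ψ‖ ^ 2 := by
  have hstep (i : Fin n) : IsKrausFamily fun b => jumpOp X P i b ∘ₗ R i :=
    (isKrausFamily_jumpOp X (hPsum i) (hP i)).comp_linearIsometry ((R i).isometryOfInner (hR i))
  exact isKrausFamily_opString hstep ψ

end OpString

/-- The collapse-model measure is a normalized classical probability measure: the measures of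
all cylinder sets of time extent `n` sum to `‖ψ₀‖²`. -/
theorem sum_krausString_norm_sq
    {H : Type*} [NormedAddCommGroup H] [InnerProductSpace ℂ H] [FiniteDimensional ℂ H]
    (n : ℕ) (X : ℝ) (hX0 : 0 ≤ X) (hX1 : X ≤ 1)
    (R : Fin n → (H →ₗ[ℂ] H)) (P : Fin n → Bool → (H →ₗ[ℂ] H))
    (hPsum : ∀ i, P i false + P i true = LinearMap.id)
    (hPidem : ∀ i b, P i b ∘ₗ P i b = P i b)
    (hPsa : ∀ i b (u v : H), ⟪P i b u, v⟫_ℂ = ⟪u, P i b v⟫_ℂ)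
    (hR : ∀ i (u v : H), ⟪R i u, R i v⟫_ℂ = ⟪u, v⟫_ℂ)
    (ψ : H) :
    ∑ α : Fin n → Bool, ‖krausString X R P α ψ‖ ^ 2 = ‖ψ‖ ^ 2 :=
  sum_krausString_norm_sq_general X hPsum (fun i => ⟨hPidem i true, hPsa i true⟩) hR ψ

end
end

section
/- In the environment model, for every Φ, E : Fin n → Bool the branch vector equals a product: S(Φ,E) Ψ₀ is the function sending E' : Fin n → Bool to (if E' = E then ((X^(d(Φ,E)) * ((Real.sqrt (1+X^2))⁻¹)^n : ℝ) : ℂ) • C(Φ)ψ₀ else 0), where C(Φ) := P (n-1) (Φ (n-1)) ∘ₗ R (n-1) ∘ₗ ⋯ ∘ₗ P 0 (Φ 0) ∘ₗ R 0 is the class string of the plain unitary field theory and d(Φ,E) is the Hamming distance. (This is the Claim proved in the appendix: the vector valued amplitude |Φⁿ,Eⁿ⟩ factorizes as X^(d(Φⁿ,Eⁿ))/(1+X²)^(n/2) times the unitary-theory branch |Φⁿ⟩ tensored with the environment basis state |Eⁿ⟩.) -/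
open scoped InnerProductSpace

noncomputable section

/-- The real 2×2 environment rotation matrices, indexed by `Bool` (`false` first; rows =
outgoing environment value, columns = incoming environment value):
`M false = (√(1+X²))⁻¹ • !![1, X; X, -1]` and `M true = (√(1+X²))⁻¹ • !![X, 1; 1, -X]`. -/
def envM (X : ℝ) (b e' e : Bool) : ℝ :=
  (Real.sqrt (1 + X ^ 2))⁻¹ *
    match b, e', e with
    | false, false, false => 1
    | false, false, true  => X
    | false, true,  false => X
    | false, true,  true  => -1
    | true,  false, false => X
    | true,  false, true  => 1
    | true,  true,  false => 1
    | true,  true,  true  => -X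

variable {H : Type*} [NormedAddCommGroup H] [InnerProductSpace ℂ H]

/-- The lifted elementary unitary evolution on the total space `(Fin n → Bool) → H`. -/
def Rhat {n : ℕ} (R : Fin n → (H →ₗ[ℂ] H)) (i : Fin n)
    (Ψ : (Fin n → Bool) → H) : (Fin n → Bool) → H :=
  fun E => R i (Ψ E)

/-- The lifted field projector on the total space. -/
def Phat {n : ℕ} (P : Fin n → Bool → (H →ₗ[ℂ] H)) (i : Fin n) (b : Bool)
    (Ψ : (Fin n → Bool) → H) : (Fin n → Bool) → H :=
  fun E => P i b (Ψ E)

/-- The environment projector on the total space. -/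
def Qhat {n : ℕ} (i : Fin n) (e : Bool)
    (Ψ : (Fin n → Bool) → H) : (Fin n → Bool) → H :=
  fun E => if E i = e then Ψ E else 0

/-- The partial measurement operator on the total space. -/
def Uhat {n : ℕ} (X : ℝ) (P : Fin n → Bool → (H →ₗ[ℂ] H)) (i : Fin n)
    (Ψ : (Fin n → Bool) → H) : (Fin n → Bool) → H :=
  fun E => ∑ b : Bool, ∑ e' : Bool,
    ((envM X b (E i) e' : ℝ) : ℂ) • P i b (Ψ (Function.update E i e'))

/-- The environment branch string
`S(Φ,E) = Q̂ (n-1) (E (n-1)) ∘ P̂ (n-1) (Φ (n-1)) ∘ Û (n-1) ∘ R̂ (n-1) ∘ ⋯ ∘ Q̂ 0 (E 0) ∘ P̂ 0 (Φ 0) ∘ Û 0 ∘ R̂ 0`. -/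
def envString {n : ℕ} (X : ℝ) (R : Fin n → (H →ₗ[ℂ] H))
    (P : Fin n → Bool → (H →ₗ[ℂ] H)) (Φ E : Fin n → Bool) :
    ((Fin n → Bool) → H) → ((Fin n → Bool) → H) :=
  (List.finRange n).foldl
    (fun acc i => Qhat i (E i) ∘ Phat P i (Φ i) ∘ Uhat X P i ∘ Rhat R i ∘ acc) id

/-- The initial state `Ψ₀`: the field state `ψ₀` tensored with the environment ground state. -/
def initState {n : ℕ} (ψ₀ : H) : (Fin n → Bool) → H :=
  fun E => if E = (fun _ => false) then ψ₀ else 0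

/-!
The branch state is tracked through the time steps as a product `Pi.single F v = v ⊗ |F⟩`.
Step `i` sends `v ⊗ |F⟩` to a multiple of `P i (Φ i) (R i v) ⊗ |F with i-th bit E i⟩`: the field
projector picks the single summand `b = Φ i` of the partial measurement, and the environment
projector picks a single matrix entry of `M (Φ i)`. Each environment bit is touched only once, so
that entry sits in row `E i` and in the column of the initial `i`-th bit; for the ground state it is
`X / √(1 + X²)` or `1 / √(1 + X²)` according to whether `E i` differs from `Φ i`.
-/

theorem orthogonalIdempotents_of_add_eq_one {S : Type*} [Ring S] {p : Bool → S}
    (hsum : p false + p true = 1) (hidem : IsIdempotentElem (p false)) :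
    OrthogonalIdempotents p := by
  have htrue : p true = 1 - p false := eq_sub_of_add_eq' hsum
  refine ⟨Bool.forall_bool.2 ⟨hidem, htrue ▸ hidem.one_sub⟩, ?_⟩
  rintro (_ | _) (_ | _) hne
  · contradiction
  · exact htrue ▸ hidem.mul_one_sub_self
  · exact htrue ▸ hidem.one_sub_mul_self
  · contradiction

section BranchStep

variable {n : ℕ} (X : ℝ) (R : Fin n → (H →ₗ[ℂ] H)) {P : Fin n → Bool → (H →ₗ[ℂ] H)}

theorem Rhat_single (i : Fin n) (F : Fin n → Bool) (v : H) :
    Rhat R i (Pi.single F v) = Pi.single F (R i v) :=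
  funext fun E => Pi.apply_single (fun _ => R i) (fun _ => map_zero (R i)) F v E

theorem Phat_Uhat {i : Fin n} (hP : OrthogonalIdempotents (P i)) (a : Bool)
    (Ψ : (Fin n → Bool) → H) :
    Phat P i a (Uhat X P i Ψ) = fun E =>
      ∑ e' : Bool, (envM X a (E i) e' : ℂ) • P i a (Ψ (Function.update E i e')) := by
  have hcomp (b : Bool) (w : H) : P i a (P i b w) = if a = b then P i a w else 0 := by
    rw [← Module.End.mul_apply, hP.mul_eq]
    split_ifs <;> rfl
  funext E
  simp only [Phat, Uhat, map_sum, map_smul, hcomp]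
  rw [Finset.sum_comm]
  simp only [smul_ite, smul_zero, Finset.sum_ite_eq, Finset.mem_univ, if_true]

theorem Qhat_Phat_Uhat_single {i : Fin n} (hP : OrthogonalIdempotents (P i))
    (a e : Bool) (F : Fin n → Bool) (v : H) :
    Qhat i e (Phat P i a (Uhat X P i (Pi.single F v))) =
      Pi.single (Function.update F i e) ((envM X a e (F i) : ℂ) • P i a v) := by
  rw [Phat_Uhat X hP]
  funext E
  by_cases hE : E = Function.update F i e
  · subst hE
    simp [Qhat, Pi.single_apply, Function.update_eq_self_iff, apply_ite (P i a)]
  · rw [Pi.single_eq_of_ne hE]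
    refine ite_eq_right_iff.2 fun hEi => Finset.sum_eq_zero fun e' _ => ?_
    have hne : Function.update E i e' ≠ F := by
      rintro rfl
      exact hE (by rw [Function.update_idem, ← hEi, Function.update_eq_self])
    rw [Pi.single_eq_of_ne hne, map_zero, smul_zero]

theorem foldl_Qhat_Phat_Uhat_Rhat_single (hP : ∀ i, OrthogonalIdempotents (P i))
    (Φ E F : Fin n → Bool) (v : H) {l : List (Fin n)} (hl : l.Nodup) :
    l.foldl (fun acc i => Qhat i (E i) ∘ Phat P i (Φ i) ∘ Uhat X P i ∘ Rhat R i ∘ acc) id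
        (Pi.single F v) =
      Pi.single (fun j => if j ∈ l then E j else F j)
        ((((l.map fun i => envM X (Φ i) (E i) (F i)).prod : ℝ) : ℂ) •
          l.foldl (fun acc i => (P i (Φ i) ∘ₗ R i) ∘ₗ acc) LinearMap.id v) := by
  induction l using List.reverseRecOn with
  | nil =>
    simp only [List.foldl_nil, List.not_mem_nil, if_false, List.map_nil, List.prod_nil,
      Complex.ofReal_one, one_smul, id_eq, LinearMap.id_apply]
  | append_singleton l i ih =>
    obtain ⟨hi, hl'⟩ : i ∉ l ∧ l.Nodup := by
      rwa [← List.concat_eq_append, List.nodup_concat] at hl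
    have hupdate : Function.update (fun j => if j ∈ l then E j else F j) i (E i) =
        fun j => if j ∈ l ++ [i] then E j else F j := by
      funext j
      rcases eq_or_ne j i with rfl | hj
      · simp
      · simp [hj]
    simp only [List.foldl_append, List.foldl_cons, List.foldl_nil, Function.comp_apply, ih hl',
      Rhat_single, Qhat_Phat_Uhat_single X (hP i), if_neg hi, hupdate, map_smul, smul_smul]
    simp only [List.map_append, List.map_cons, List.map_nil, List.prod_append, List.prod_cons,
      List.prod_nil, mul_one, Complex.ofReal_mul, mul_comm, LinearMap.comp_apply]

theorem envString_single (hP : ∀ i, OrthogonalIdempotents (P i))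
    (Φ E F : Fin n → Bool) (v : H) :
    envString X R P Φ E (Pi.single F v) =
      Pi.single E (((∏ i, envM X (Φ i) (E i) (F i) : ℝ) : ℂ) • classString R P Φ v) := by
  rw [envString, foldl_Qhat_Phat_Uhat_Rhat_single X R hP Φ E F v (List.nodup_finRange n)]
  simp only [List.mem_finRange, if_true, Fin.prod_univ_def, classString, opString]

end BranchStep

theorem envM_false (X : ℝ) (a e : Bool) :
    envM X a e false = (if a ≠ e then X else 1) * (Real.sqrt (1 + X ^ 2))⁻¹ := by
  cases a <;> cases e <;> simp [envM, mul_comm]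

theorem prod_envM_false {n : ℕ} (X : ℝ) (Φ E : Fin n → Bool) :
    ∏ i, envM X (Φ i) (E i) false = X ^ hamming Φ E * ((Real.sqrt (1 + X ^ 2))⁻¹) ^ n := by
  simp only [envM_false, Finset.prod_mul_distrib, Finset.prod_ite, Finset.prod_const, one_pow,
    mul_one, Finset.card_univ, Fintype.card_fin, hamming]

theorem initState_eq_single {V : Type*} [NormedAddCommGroup V] {n : ℕ} (ψ₀ : V) :
    initState ψ₀ = Pi.single (fun _ : Fin n => false) ψ₀ :=
  funext fun E => (Pi.single_apply _ ψ₀ E).symm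

theorem envString_apply_initState_general {n : ℕ} (X : ℝ) (R : Fin n → (H →ₗ[ℂ] H))
    {P : Fin n → Bool → (H →ₗ[ℂ] H)} (hP : ∀ i, OrthogonalIdempotents (P i))
    (ψ₀ : H) (Φ E : Fin n → Bool) :
    envString X R P Φ E (initState ψ₀) =
      fun E' : Fin n → Bool =>
        if E' = E then
          ((X ^ hamming Φ E * ((Real.sqrt (1 + X ^ 2))⁻¹) ^ n : ℝ) : ℂ) •
            classString R P Φ ψ₀
        else 0 := by
  rw [initState_eq_single, envString_single X R hP, ← prod_envM_false]
  exact funext fun E' => Pi.single_apply _ _ E'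

/-- The appendix Claim: the branch vector of the environment model factorizes as
`X^{d(Φ,E)} (√(1+X²))⁻ⁿ` times the unitary-theory branch `C(Φ)ψ₀` tensored with the
environment basis state `|E⟩`. -/
theorem envString_apply_initState
    {H : Type*} [NormedAddCommGroup H] [InnerProductSpace ℂ H] [FiniteDimensional ℂ H]
    (n : ℕ) (X : ℝ) (hX0 : 0 ≤ X) (hX1 : X ≤ 1)
    (R : Fin n → (H →ₗ[ℂ] H)) (P : Fin n → Bool → (H →ₗ[ℂ] H))
    (hPsum : ∀ i, P i false + P i true = LinearMap.id)
    (hPidem : ∀ i b, P i b ∘ₗ P i b = P i b)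
    (ψ₀ : H) (Φ E : Fin n → Bool) :
    envString X R P Φ E (initState ψ₀) =
      fun E' : Fin n → Bool =>
        if E' = E then
          ((X ^ hamming Φ E * ((Real.sqrt (1 + X ^ 2))⁻¹) ^ n : ℝ) : ℂ) •
            classString R P Φ ψ₀
        else 0 :=
  envString_apply_initState_general X R (fun i =>
    orthogonalIdempotents_of_add_eq_one (hPsum i) (hPidem i false)) ψ₀ Φ E

end
end

section
/- Let Ω be a type and let D : Set Ω → Set Ω → ℂ satisfy: (Hermiticity) D A B = conj (D B A) for all A, B; and (additivity) for all disjoint A, B and all C, D (A ∪ B) C = D A C + D B C. Define μ A := (D A A).re. Then for all pairwise disjoint X, Y, Z ⊆ Ω, the third-level interference term vanishes: μ(X ∪ Y ∪ Z) − μ(X ∪ Y) − μ(Y ∪ Z) − μ(Z ∪ X) + μ(X) + μ(Y) + μ(Z) = 0. (This is the paper's claim that any measure arising from a decoherence functional is a level 2 (quantum) measure, i.e. satisfies the sum rule I₃ = 0.) -/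
open ComplexConjugate

/-!
The interference `I₂(a, b) = μ (a ⊔ b) - μ a - μ b` of two events measures the failure of `μ` to be
additive, and `I₃(x, y, z) = I₂(x ⊔ y, z) - I₂(x, z) - I₂(y, z)` measures the failure of `I₂` to be
additive in its first argument. When `μ a = D a a` with `D` additive in each argument, `I₂` is the
cross term `D a b + D b a`, which is additive, so `I₃ = 0`.
-/

section Interference

variable {α M : Type*} [SemilatticeSup α] [AddCommGroup M]

/-- The second interference term `I₂` of a measure `μ`. Events form a join-semilattice, and as the
definition makes sense for all pairs, disjointness is left to the lemmas. -/
def pairInterference (μ : α → M) (a b : α) : M :=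
  μ (a ⊔ b) - μ a - μ b

/-- The third interference term `I₃` of a measure `μ`, which vanishes on disjoint events exactly
when `μ` is a level 2 measure. As for `pairInterference`, disjointness is left to the lemmas. -/
def tripleInterference (μ : α → M) (x y z : α) : M :=
  μ (x ⊔ y ⊔ z) - μ (x ⊔ y) - μ (y ⊔ z) - μ (z ⊔ x) + μ x + μ y + μ z

lemma tripleInterference_eq_pairInterference_sub (μ : α → M) (x y z : α) :
    tripleInterference μ x y z =
      pairInterference μ (x ⊔ y) z - pairInterference μ x z - pairInterference μ y z := by
  rw [tripleInterference, sup_comm z x]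
  unfold pairInterference
  abel

end Interference

/-- A function of two events that is additive on disjoint joins in each argument; decoherence
functionals are the motivating example. Events are elements of a semilattice, with sets of histories
as the special case `α = Set Ω`. -/
structure IsBiadditiveOnDisjoint {α M : Type*} [SemilatticeSup α] [OrderBot α] [Add M]
    (D : α → α → M) : Prop where
  add_left {a b : α} (c : α) : Disjoint a b → D (a ⊔ b) c = D a c + D b c
  add_right {a b : α} (c : α) : Disjoint a b → D c (a ⊔ b) = D c a + D c b

namespace IsBiadditiveOnDisjoint

lemma of_hermitian {α M : Type*} [SemilatticeSup α] [OrderBot α] [AddMonoid M] [StarAddMonoid M]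
    {D : α → α → M} (hherm : ∀ a b, D a b = star (D b a))
    (hadd : ∀ a b c, Disjoint a b → D (a ⊔ b) c = D a c + D b c) :
    IsBiadditiveOnDisjoint D where
  add_left c hab := hadd _ _ c hab
  add_right {a b} c hab := by
    rw [hherm c (a ⊔ b), hadd a b c hab, star_add, ← hherm c a, ← hherm c b]

lemma pairInterference_diag {α M : Type*} [SemilatticeSup α] [OrderBot α] [AddCommGroup M]
    {D : α → α → M} (hD : IsBiadditiveOnDisjoint D) {a b : α} (hab : Disjoint a b) :
    pairInterference (fun e ↦ D e e) a b = D a b + D b a := by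
  rw [pairInterference, hD.add_left _ hab, hD.add_right _ hab, hD.add_right _ hab]
  abel

end IsBiadditiveOnDisjoint

theorem decoherence_measure_is_level_two_general {α M : Type*} [DistribLattice α] [OrderBot α]
    [AddCommGroup M] {D : α → α → M} (hD : IsBiadditiveOnDisjoint D) {x y z : α}
    (hxy : Disjoint x y) (hyz : Disjoint y z) (hxz : Disjoint x z) :
    tripleInterference (fun e ↦ D e e) x y z = 0 := by
  have hxy_z : Disjoint (x ⊔ y) z := disjoint_sup_left.mpr ⟨hxz, hyz⟩
  rw [tripleInterference_eq_pairInterference_sub, hD.pairInterference_diag hxy_z,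
    hD.pairInterference_diag hxz, hD.pairInterference_diag hyz, hD.add_left z hxy,
    hD.add_right z hxy]
  abel

/-- Any measure arising from a decoherence functional (Hermitian and additive on disjoint
unions) is a level 2 (quantum) measure: the third interference term `I₃` vanishes for
pairwise disjoint events. -/
theorem decoherence_measure_is_level_two {Ω : Type*} (D : Set Ω → Set Ω → ℂ)
    (hherm : ∀ A B : Set Ω, D A B = conj (D B A))
    (hadd : ∀ A B C : Set Ω, Disjoint A B → D (A ∪ B) C = D A C + D B C)
    (X Y Z : Set Ω) (hXY : Disjoint X Y) (hYZ : Disjoint Y Z) (hXZ : Disjoint X Z) :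
    (D (X ∪ Y ∪ Z) (X ∪ Y ∪ Z)).re - (D (X ∪ Y) (X ∪ Y)).re - (D (Y ∪ Z) (Y ∪ Z)).re -
        (D (Z ∪ X) (Z ∪ X)).re + (D X X).re + (D Y Y).re + (D Z Z).re = 0 := by
  have hD : IsBiadditiveOnDisjoint D := .of_hermitian hherm hadd
  exact congrArg Complex.re (decoherence_measure_is_level_two_general hD hXY hYZ hXZ)
end
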